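/- Let 𝒳 be a Polish space, d ∈ ℕ, r ∈ [1,∞), μ ∈ 𝒫_r(𝒳), ν ∈ 𝒫_r(ℝ^d), and let C : 𝒳 × 𝒫_r(ℝ^d) → ℝ̄ be measurable and barycentric (i.e. C(x,p) = C(x,q) whenever b(p) = b(q)) such that ∫ C(x,p) P(dx,dp) is well-defined for every P ∈ Λ(μ,ν). Then inf_{P ∈ Λ(μ,ν)} ∫ C(x,p) P(dx,dp) = inf_{ν' ≤_c ν} inf_{π ∈ Π(μ,ν')} ∫ C(x,δ_y) π(dx,dy), where the outer infimum runs over all ν' ∈ 𝒫_r(ℝ^d) dominated by ν in convex order. -/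

import Mathlib

open MeasureTheory Set Filter
open scoped ENNReal NNReal Topology RealInnerProductSpace

noncomputable section

namespace WOT

/-- The set of couplings of `μ` and `ν`. -/
def Couplings {X Y : Type*} [MeasurableSpace X] [MeasurableSpace Y]
    (μ : Measure X) (ν : Measure Y) : Set (Measure (X × Y)) :=
  {π | π.map Prod.fst = μ ∧ π.map Prod.snd = ν}

/-- `K` is a disintegration of `π` with respect to its first marginal `μ`. -/
def IsDisint {X Y : Type*} [MeasurableSpace X] [MeasurableSpace Y]
    (π : Measure (X × Y)) (μ : Measure X) (K : X → Measure Y) : Prop :=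
  Measurable K ∧ (∀ x, IsProbabilityMeasure (K x)) ∧
    ∀ s : Set (X × Y), MeasurableSet s → π s = ∫⁻ x, K x (Prod.mk x ⁻¹' s) ∂μ

/-- The intensity `I(Q)` of a measure on measures. -/
def intensity {Y : Type*} [MeasurableSpace Y] (Q : Measure (Measure Y)) : Measure Y :=
  Q.join

/-- The intensity map `Î`. -/
def intensityHat {X Y : Type*} [MeasurableSpace X] [MeasurableSpace Y]
    (P : Measure (X × Measure Y)) : Measure (X × Y) :=
  P.bind fun xp => (Measure.dirac xp.1).prod xp.2

/-- `Λ(μ,ν)`, the set of probability measures on `X × 𝒫(Y)` whose intensity is a coupling. -/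
def Lambda {X Y : Type*} [MeasurableSpace X] [MeasurableSpace Y]
    (μ : Measure X) (ν : Measure Y) : Set (Measure (X × Measure Y)) :=
  {P | IsProbabilityMeasure P ∧ (∀ᵐ xp ∂P, IsProbabilityMeasure xp.2) ∧
    intensityHat P ∈ Couplings μ ν}

/-- Finite `r`-th moment. -/
def FinMom {X : Type*} [MeasurableSpace X] [PseudoMetricSpace X]
    (r : ℝ) (x₀ : X) (μ : Measure X) : Prop :=
  ∫⁻ x, ENNReal.ofReal (dist x x₀ ^ r) ∂μ < ⊤

/-- The growth class `Φ_r`. -/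
def PhiR {X : Type*} [PseudoMetricSpace X] (r : ℝ) (x₀ : X) : Set (X → ℝ) :=
  {φ | Continuous φ ∧ ∃ K : ℝ, ∀ x, |φ x| ≤ K * (1 + dist x x₀ ^ r)}

/-- The `r`-Wasserstein distance (valued in `ℝ≥0∞`). -/
def Wr {Y : Type*} [MeasurableSpace Y] [PseudoMetricSpace Y]
    (r : ℝ) (p q : Measure Y) : ℝ≥0∞ :=
  ⨅ π ∈ Couplings p q, (∫⁻ z : Y × Y, ENNReal.ofReal (dist z.1 z.2 ^ r) ∂π) ^ (1 / r)

/-- `𝒫_r(Y)`: probability measures with finite `r`-th moment. -/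
def Pr {Y : Type*} [MeasurableSpace Y] [PseudoMetricSpace Y] (r : ℝ) (y₀ : Y) :
    Set (Measure Y) :=
  {p | IsProbabilityMeasure p ∧ FinMom r y₀ p}

/-- `𝒫_r(𝒫_r(Y))`: probability measures on `𝒫_r(Y)` with finite `r`-th moment w.r.t. `𝒲_r`. -/
def PrP {Y : Type*} [MeasurableSpace Y] [PseudoMetricSpace Y] (r : ℝ) (y₀ : Y) :
    Set (Measure (Measure Y)) :=
  {Q | IsProbabilityMeasure Q ∧ (∀ᵐ p ∂Q, p ∈ Pr r y₀) ∧
    ∫⁻ p, Wr r p (Measure.dirac y₀) ^ r ∂Q < ⊤}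

/-- The positive part of an extended real, valued in `ℝ≥0∞`. -/
def epos (e : EReal) : ℝ≥0∞ := if e = ⊤ then ⊤ else ENNReal.ofReal e.toReal

/-- Extended-real integral: positive part minus negative part (with value `⊥` when
both parts are infinite, i.e. when the integral is not well-defined). -/
def eInt {X : Type*} [MeasurableSpace X] (f : X → EReal) (μ : Measure X) : EReal :=
  ((∫⁻ x, epos (f x) ∂μ : ℝ≥0∞) : EReal) - ((∫⁻ x, epos (-(f x)) ∂μ : ℝ≥0∞) : EReal)

/-- Extended-real integral with the opposite (`⊤`) convention for ill-defined integrals. -/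
def eIntU {X : Type*} [MeasurableSpace X] (f : X → EReal) (μ : Measure X) : EReal :=
  -eInt (fun x => -(f x)) μ

/-- The extended-real integral is well-defined. -/
def eIntWellDef {X : Type*} [MeasurableSpace X] (f : X → EReal) (μ : Measure X) : Prop :=
  (∫⁻ x, epos (f x) ∂μ ≠ ⊤) ∨ (∫⁻ x, epos (-(f x)) ∂μ ≠ ⊤)

/-- Convergence in the `r`-Wasserstein distance. -/
def WrTendsto {Y : Type*} [MeasurableSpace Y] [PseudoMetricSpace Y]
    (r : ℝ) (ps : ℕ → Measure Y) (p : Measure Y) : Prop :=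
  Tendsto (fun n => Wr r (ps n) p) atTop (nhds 0)

/-- (Sequential) lower semicontinuity on `𝒫_r(Y)` w.r.t. `𝒲_r`. -/
def LscWr1 {Y : Type*} [MeasurableSpace Y] [PseudoMetricSpace Y]
    (r : ℝ) (y₀ : Y) (G : Measure Y → EReal) : Prop :=
  ∀ (p : Measure Y) (ps : ℕ → Measure Y), p ∈ Pr r y₀ → (∀ n, ps n ∈ Pr r y₀) →
    WrTendsto r ps p → G p ≤ liminf (fun n => G (ps n)) atTop

/-- (Sequential) upper semicontinuity on `𝒫_r(Y)` w.r.t. `𝒲_r`. -/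
def UscWr1 {Y : Type*} [MeasurableSpace Y] [PseudoMetricSpace Y]
    (r : ℝ) (y₀ : Y) (G : Measure Y → EReal) : Prop :=
  ∀ (p : Measure Y) (ps : ℕ → Measure Y), p ∈ Pr r y₀ → (∀ n, ps n ∈ Pr r y₀) →
    WrTendsto r ps p → limsup (fun n => G (ps n)) atTop ≤ G p

/-- (Sequential) lower semicontinuity on `X × 𝒫_r(Y)` w.r.t. `d_X × 𝒲_r`. -/
def LscWr {X Y : Type*} [TopologicalSpace X] [MeasurableSpace Y] [PseudoMetricSpace Y]
    (r : ℝ) (y₀ : Y) (C : X × Measure Y → EReal) : Prop :=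
  ∀ (x : X) (xs : ℕ → X) (p : Measure Y) (ps : ℕ → Measure Y),
    p ∈ Pr r y₀ → (∀ n, ps n ∈ Pr r y₀) → Tendsto xs atTop (nhds x) → WrTendsto r ps p →
    C (x, p) ≤ liminf (fun n => C (xs n, ps n)) atTop

/-- (Sequential) continuity of a real-valued cost on `X × 𝒫_r(Y)` w.r.t. `d_X × 𝒲_r`. -/
def ContWr {X Y : Type*} [TopologicalSpace X] [MeasurableSpace Y] [PseudoMetricSpace Y]
    (r : ℝ) (y₀ : Y) (C : X × Measure Y → ℝ) : Prop :=
  ∀ (x : X) (xs : ℕ → X) (p : Measure Y) (ps : ℕ → Measure Y),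
    p ∈ Pr r y₀ → (∀ n, ps n ∈ Pr r y₀) → Tendsto xs atTop (nhds x) → WrTendsto r ps p →
    Tendsto (fun n => C (xs n, ps n)) atTop (nhds (C (x, p)))

/-- Convexity of an extended-real-valued function on a set of measures. -/
def EConvexOn {Y : Type*} [MeasurableSpace Y] (S : Set (Measure Y)) (G : Measure Y → EReal) :
    Prop :=
  ∀ p ∈ S, ∀ q ∈ S, ∀ t : ℝ≥0, t ≤ 1 →
    G ((t : ℝ≥0∞) • p + ((1 - t : ℝ≥0) : ℝ≥0∞) • q)
      ≤ ((t : ℝ) : EReal) * G p + (((1 - t : ℝ≥0) : ℝ) : EReal) * G q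

/-- The lower semicontinuous convex envelope (on `𝒫_r(Y)` w.r.t. `𝒲_r`). -/
def cvxEnvWr {Y : Type*} [MeasurableSpace Y] [PseudoMetricSpace Y]
    (r : ℝ) (y₀ : Y) (f : Measure Y → EReal) : Measure Y → EReal :=
  fun p => ⨆ G ∈ {G : Measure Y → EReal |
    LscWr1 r y₀ G ∧ EConvexOn (Pr r y₀) G ∧ ∀ q ∈ Pr r y₀, G q ≤ f q}, G p

/-- The cost `C̃(x,p) = inf {∫ C(x,q) Q(dq) : Q ∈ 𝒫_r(𝒫_r(Y)), I(Q) = p}`. -/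
def tildeC {X Y : Type*} [MeasurableSpace X] [MeasurableSpace Y] [PseudoMetricSpace Y]
    (r : ℝ) (y₀ : Y) (C : X × Measure Y → EReal) : X × Measure Y → EReal :=
  fun xp => ⨅ Q ∈ {Q | Q ∈ PrP r y₀ ∧ intensity Q = xp.2}, eInt (fun q => C (xp.1, q)) Q

/-- The barycenter of a measure on a normed space. -/
def bary {E : Type*} [NormedAddCommGroup E] [NormedSpace ℝ E] [MeasurableSpace E]
    (p : Measure E) : E :=
  ∫ y, y ∂p

/-- Convex order of measures. -/
def ConvexOrder {E : Type*} [NormedAddCommGroup E] [NormedSpace ℝ E] [MeasurableSpace E]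
    (ν' ν : Measure E) : Prop :=
  ∀ θ : E → ℝ, ConvexOn ℝ Set.univ θ →
    eInt (fun y => ((θ y : ℝ) : EReal)) ν' ≤ eInt (fun y => ((θ y : ℝ) : EReal)) ν

/-- The inf-convolution `R_C ψ`. -/
def RC {X Y : Type*} [MeasurableSpace Y] [PseudoMetricSpace Y]
    (r : ℝ) (y₀ : Y) (C : X × Measure Y → EReal) (ψ : Y → ℝ) : X → EReal :=
  fun x => ⨅ p ∈ Pr r y₀, (((-∫ y, ψ y ∂p : ℝ) : EReal) + C (x, p))

/-- `κ` is a regular conditional distribution of `Yv` given the sub-σ-algebra `m1`. -/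
def IsRCD {Ω Y : Type*} [MeasurableSpace Y] (m1 : MeasurableSpace Ω)
    (mΩ : MeasurableSpace Ω) (P : @Measure Ω mΩ) (Yv : Ω → Y) (κ : Ω → Measure Y) : Prop :=
  (∀ ω, IsProbabilityMeasure (κ ω)) ∧ Measurable[m1] κ ∧
    ∀ A : Set Y, MeasurableSet A → ∀ B : Set Ω, MeasurableSet[m1] B →
      P (B ∩ Yv ⁻¹' A) = ∫⁻ ω in B, κ ω A ∂P

end WOT

open WOT

/-!
A measure `P ∈ Λ(μ,ν)` is the law of a pair `(ξ, κ)`, where `ξ` has law `μ` and the random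
probability measure `κ` averages to `ν`. If `C` is barycentric, then `C (ξ, κ)` and
`C (ξ, δ_{b(κ)})` agree almost surely, and by Jensen's inequality the law `ν'` of `b(κ)` is
dominated by `ν` in convex order: the law of `(ξ, b(κ))` is the required coupling of `μ` and `ν'`.
Conversely, if `ν' ≤_c ν`, Strassen's theorem gives a Markov kernel `K` with `K ∘ ν' = ν` and
`b(K y) = y` for almost every `y`, so that a coupling `(ξ, η)` of `μ` and `ν'` lifts to `(ξ, K η)`,
whose law lies in `Λ(μ,ν)`. Both sides therefore range over the same laws of the cost.

For Strassen's theorem, prescribe a functional on the test functions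
`g y + f z + φ y (z - y)` by the value `∫ g dν' + ∫ f dν`. It is positive: if the test function is
nonnegative, then `θ z = sup_y (-g y - φ y (z - y))` is convex and lies between `-g` and `f`, whence
`-∫ g dν' ≤ ∫ θ dν' ≤ ∫ θ dν ≤ ∫ f dν`. The Riesz extension theorem and the Riesz–Markov–Kakutani
theorem turn it into a martingale coupling of `ν'` and `ν`, and `K` is its disintegration.
-/

namespace WOT

open ProbabilityTheory Asymptotics
open scoped BoundedContinuousFunction

/-! ### Positive functionals on functions of linear growth -/

lemma exists_positiveLinearMap_comp_eq {A V : Type*} [AddCommGroup A] [Module ℝ A]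
    [AddCommGroup V] [PartialOrder V] [IsOrderedAddMonoid V] [Module ℝ V] [PosSMulMono ℝ V]
    (T : A →ₗ[ℝ] V) (L : A →ₗ[ℝ] ℝ) (hL : ∀ a, 0 ≤ T a → 0 ≤ L a) (hT : ∀ v, ∃ a, v ≤ T a) :
    ∃ l : V →ₚ[ℝ] ℝ, ∀ a, l (T a) = L a := by
  have hker : L ∈ T.ker.dualAnnihilator := by
    refine (Submodule.mem_dualAnnihilator _).2 fun a (ha : T a = 0) => le_antisymm ?_ (hL a ha.ge)
    simpa using hL (-a) (by simp [ha])
  obtain ⟨l₀, rfl⟩ := T.range_dualMap_eq_dualAnnihilator_ker.ge hker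
  obtain ⟨l, hl_eq, hl_nonneg⟩ := riesz_extension (PointedCone.positive ℝ V)
    ⟨T.range, l₀.domRestrict T.range⟩ (by rintro ⟨_, a, rfl⟩ ha; exact hL a ha)
    (fun v => by
      obtain ⟨a, ha⟩ := hT (-v)
      exact ⟨⟨T a, a, rfl⟩, by simpa using neg_le_iff_add_nonneg.1 ha⟩)
  exact ⟨PositiveLinearMap.mk₀ l hl_nonneg, fun a => hl_eq ⟨T a, a, rfl⟩⟩

/-- The space of continuous real functions on `F` which grow at most linearly, with the pointwise
order: the test functions against which measures with finite first moment are compared. -/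
def AtMostLinear (F : Type*) [NormedAddCommGroup F] : Submodule ℝ (F → ℝ) where
  carrier := {g | Continuous g ∧ g =O[⊤] fun y => 1 + ‖y‖}
  add_mem' hf hg := ⟨hf.1.add hg.1, hf.2.add hg.2⟩
  zero_mem' := ⟨continuous_const, isBigO_zero _ _⟩
  smul_mem' c _ hg := ⟨hg.1.const_smul c, hg.2.const_smul_left c⟩

namespace AtMostLinear

section Basic

variable {F G : Type*} [NormedAddCommGroup F] [NormedAddCommGroup G]

instance : PosSMulMono ℝ (AtMostLinear F) where
  smul_le_smul_of_nonneg_left _ hc _ _ hfg y := mul_le_mul_of_nonneg_left (hfg y) hc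

lemma mul_mem_of_bounded (f : F →ᵇ ℝ) {g : F → ℝ} (hg : g ∈ AtMostLinear F) :
    ⇑f * g ∈ AtMostLinear F := by
  refine ⟨f.continuous.mul hg.1, ?_⟩
  have hf : ⇑f =O[⊤] fun _ => (1 : ℝ) :=
    IsBigO.of_bound ‖f‖ (.of_forall fun y => by simpa using f.norm_coe_le_norm y)
  exact (hf.mul hg.2).congr_right fun y => one_mul _

lemma mem_of_bounded (g : F →ᵇ ℝ) : ⇑g ∈ AtMostLinear F := by
  refine ⟨g.continuous, IsBigO.of_bound ‖g‖ (.of_forall fun y => (g.norm_coe_le_norm y).trans ?_)⟩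
  rw [Real.norm_of_nonneg (by positivity)]
  exact le_mul_of_one_le_right (norm_nonneg g) (le_add_of_nonneg_right (norm_nonneg y))

/-- The weight `1 + ‖·‖` dominating the space of functions of linear growth. -/
def weight (F : Type*) [NormedAddCommGroup F] : AtMostLinear F :=
  ⟨fun y => 1 + ‖y‖, by fun_prop, isBigO_refl _ _⟩

lemma weight_nonneg : 0 ≤ weight F := fun y => add_nonneg zero_le_one (norm_nonneg y)

lemma exists_abs_le_mul_weight (g : AtMostLinear F) : ∃ c, ∀ y, |g.1 y| ≤ c * (weight F).1 y := by
  obtain ⟨c, hc⟩ := isBigO_top.1 g.2.2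
  refine ⟨c, fun y => (hc y).trans_eq ?_⟩
  rw [Real.norm_of_nonneg (by positivity), weight]

lemma integrable [MeasurableSpace F] [BorelSpace F] {μ : Measure F}
    (hμ : Integrable (weight F).1 μ) (g : AtMostLinear F) : Integrable g.1 μ := by
  obtain ⟨c, hc⟩ := exists_abs_le_mul_weight g
  exact (hμ.const_mul c).mono' g.2.1.measurable.aestronglyMeasurable (.of_forall hc)

/-- Integration against a measure with finite first moment. -/
def integralₗ [MeasurableSpace F] [BorelSpace F] (μ : Measure F)
    (hμ : Integrable (weight F).1 μ) : AtMostLinear F →ₗ[ℝ] ℝ where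
  toFun g := ∫ y, g.1 y ∂μ
  map_add' f g := integral_add (integrable hμ f) (integrable hμ g)
  map_smul' c g := integral_const_mul c g.1

/-- The pullback of functions of linear growth by a continuous linear map. -/
def pullback [NormedSpace ℝ F] [NormedSpace ℝ G] (A : F →L[ℝ] G) :
    AtMostLinear G →ₗ[ℝ] AtMostLinear F where
  toFun g := ⟨g.1 ∘ A, g.2.1.comp A.continuous, (g.2.2.comp_tendsto tendsto_top).trans <| by
    refine IsBigO.of_bound (1 + ‖A‖) (.of_forall fun y => ?_)
    have := A.le_opNorm y
    rw [Function.comp_apply, Real.norm_of_nonneg (by positivity),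
      Real.norm_of_nonneg (by positivity)]
    nlinarith [norm_nonneg y, norm_nonneg A]⟩
  map_add' _ _ := rfl
  map_smul' _ _ := rfl

end Basic

section Truncation

variable {F : Type*} [NormedAddCommGroup F]

/-- The radial cutoff equal to `1` for `‖y‖ ≤ n` and to `0` for `n + 1 ≤ ‖y‖`. -/
def cutoff (n : ℕ) (y : F) : ℝ := max 0 (min 1 (n + 1 - ‖y‖))

lemma cutoff_nonneg (n : ℕ) (y : F) : 0 ≤ cutoff n y := le_max_left _ _

lemma cutoff_le_one (n : ℕ) (y : F) : cutoff n y ≤ 1 := max_le zero_le_one (min_le_left _ _)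

lemma continuous_cutoff (n : ℕ) : Continuous (cutoff n : F → ℝ) := by unfold cutoff; fun_prop

lemma hasCompactSupport_cutoff [ProperSpace F] (n : ℕ) :
    HasCompactSupport (cutoff n : F → ℝ) := by
  refine .of_support_subset_isCompact (isCompact_closedBall 0 (n + 1 : ℝ)) fun y hy => ?_
  contrapose! hy
  rw [mem_closedBall_zero_iff, not_le] at hy
  rw [Function.notMem_support]
  exact max_eq_left (min_le_of_right_le (sub_nonpos.2 hy.le))

lemma tendsto_cutoff (y : F) : Tendsto (fun n : ℕ => cutoff n y) atTop (𝓝 1) := by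
  refine tendsto_const_nhds.congr' ?_
  filter_upwards [eventually_ge_atTop ⌈‖y‖⌉₊] with n hn
  have : ‖y‖ ≤ n := Nat.ceil_le.1 hn
  rw [cutoff, min_eq_left (by linarith), max_eq_right zero_le_one]

lemma abs_mul_cutoff_le (n : ℕ) (t : ℝ) (y : F) : |t * cutoff n y| ≤ |t| := by
  rw [abs_mul, abs_of_nonneg (cutoff_nonneg n y)]
  exact mul_le_of_le_one_right (abs_nonneg t) (cutoff_le_one n y)

/-- Multiplication by the radial cutoff. -/
def truncate (n : ℕ) : AtMostLinear F →ₗ[ℝ] AtMostLinear F where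
  toFun g := ⟨fun y => g.1 y * cutoff n y, g.2.1.mul (continuous_cutoff n),
    (isBigO_of_le _ fun y => abs_mul_cutoff_le n (g.1 y) y).trans g.2.2⟩
  map_add' f g := Subtype.ext <| funext fun y => add_mul (f.1 y) (g.1 y) (cutoff n y)
  map_smul' c g := Subtype.ext <| funext fun y => mul_assoc c (g.1 y) (cutoff n y)

lemma hasCompactSupport_truncate [ProperSpace F] (n : ℕ) (g : AtMostLinear F) :
    HasCompactSupport (truncate n g).1 :=
  (hasCompactSupport_cutoff n).mul_left

lemma tendsto_truncate_apply (g : AtMostLinear F) (y : F) :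
    Tendsto (fun n => (truncate n g).1 y) atTop (𝓝 (g.1 y)) := by
  have := (tendsto_cutoff y).const_mul (g.1 y)
  rwa [mul_one] at this

lemma truncate_weight_le (n : ℕ) : truncate n (weight F) ≤ weight F := fun y =>
  mul_le_of_le_one_right (weight_nonneg y) (cutoff_le_one n y)

lemma tendsto_integral_truncate [MeasurableSpace F] [BorelSpace F] {μ : Measure F}
    (hμ : Integrable (weight F).1 μ) (g : AtMostLinear F) :
    Tendsto (fun n => ∫ y, (truncate n g).1 y ∂μ) atTop (𝓝 (∫ y, g.1 y ∂μ)) :=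
  tendsto_integral_of_dominated_convergence (fun y => |g.1 y|)
    (fun n => (truncate n g).2.1.measurable.aestronglyMeasurable) (integrable hμ g).abs
    (fun n => .of_forall fun y => abs_mul_cutoff_le n (g.1 y) y)
    (.of_forall (tendsto_truncate_apply g))

end Truncation

section Representation

variable {F : Type*} [NormedAddCommGroup F] {l : AtMostLinear F →ₚ[ℝ] ℝ}

lemma tendsto_map_truncate
    (hl : Tendsto (fun n => l (truncate n (weight F))) atTop (𝓝 (l (weight F))))
    (g : AtMostLinear F) : Tendsto (fun n => l (truncate n g)) atTop (𝓝 (l g)) := by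
  obtain ⟨c, hc⟩ := exists_abs_le_mul_weight g
  have hle (n : ℕ) (f : AtMostLinear F) (hf : ∀ y, f.1 y ≤ c * (weight F).1 y) :
      l f - l (truncate n f) ≤ c * (l (weight F) - l (truncate n (weight F))) := by
    rw [← map_sub, ← map_sub, ← smul_eq_mul, ← map_smul]
    refine OrderHomClass.mono l fun y => ?_
    calc f.1 y - f.1 y * cutoff n y
        = f.1 y * (1 - cutoff n y) := by ring
      _ ≤ c * (weight F).1 y * (1 - cutoff n y) :=
        mul_le_mul_of_nonneg_right (hf y) (sub_nonneg.2 (cutoff_le_one n y))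
      _ = c * ((weight F).1 y - (weight F).1 y * cutoff n y) := by ring
  have bound (n : ℕ) :
      |l g - l (truncate n g)| ≤ c * (l (weight F) - l (truncate n (weight F))) := by
    have hneg := hle n (-g) fun y => (neg_le_abs _).trans (hc y)
    rw [map_neg, map_neg, map_neg] at hneg
    exact abs_le.2 ⟨by linarith, hle n g fun y => (le_abs_self _).trans (hc y)⟩
  rw [tendsto_iff_norm_sub_tendsto_zero]
  refine squeeze_zero (fun _ => norm_nonneg _) (fun n => (norm_sub_rev _ _).trans_le (bound n)) ?_
  simpa using (hl.const_sub (l (weight F))).const_mul c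

variable [MeasurableSpace F] [BorelSpace F]

open CompactlySupported in
/-- The inclusion of the compactly supported continuous functions, through which the
Riesz–Markov–Kakutani theorem applies to positive functionals on `AtMostLinear F`. -/
def ofCompactlySupported : C_c(F, ℝ) →ₚ[ℝ] AtMostLinear F where
  toFun f := ⟨f, mem_of_bounded (f : F →ᵇ ℝ)⟩
  map_add' _ _ := rfl
  map_smul' _ _ := rfl
  monotone' _ _ h := h

variable [ProperSpace F]

/-- The measure representing a positive functional on functions of compact support. -/
def rieszMeasure (l : AtMostLinear F →ₚ[ℝ] ℝ) : Measure F :=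
  RealRMK.rieszMeasure (l.comp ofCompactlySupported)

instance : (rieszMeasure l).Regular := RealRMK.regular_rieszMeasure _

lemma integral_rieszMeasure_truncate (n : ℕ) (g : AtMostLinear F) :
    ∫ y, (truncate n g).1 y ∂rieszMeasure l = l (truncate n g) :=
  RealRMK.integral_rieszMeasure (l.comp ofCompactlySupported)
    ⟨⟨(truncate n g).1, (truncate n g).2.1⟩, hasCompactSupport_truncate n g⟩

lemma integrable_weight_rieszMeasure : Integrable (weight F).1 (rieszMeasure l) := by
  have trunc_nonneg (n : ℕ) (y : F) : 0 ≤ (truncate n (weight F)).1 y :=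
    mul_nonneg (weight_nonneg y) (cutoff_nonneg n y)
  have trunc_integrable (n : ℕ) : Integrable (truncate n (weight F)).1 (rieszMeasure l) :=
    (truncate n (weight F)).2.1.integrable_of_hasCompactSupport (hasCompactSupport_truncate n _)
  have bound (n : ℕ) : ∫⁻ y, ‖(truncate n (weight F)).1 y‖ₑ ∂rieszMeasure l ≤
      ENNReal.ofReal (l (weight F)) := by
    simp_rw [Real.enorm_of_nonneg (trunc_nonneg n _)]
    rw [← ofReal_integral_eq_lintegral_ofReal (trunc_integrable n) (.of_forall (trunc_nonneg n)),
      integral_rieszMeasure_truncate]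
    exact ENNReal.ofReal_le_ofReal (OrderHomClass.mono l (truncate_weight_le n))
  have lim (y : F) : liminf (fun n => ‖(truncate n (weight F)).1 y‖ₑ) atTop = ‖(weight F).1 y‖ₑ :=
    (tendsto_truncate_apply (weight F) y).enorm.liminf_eq
  refine ⟨(weight F).2.1.measurable.aestronglyMeasurable, ?_⟩
  calc ∫⁻ y, ‖(weight F).1 y‖ₑ ∂rieszMeasure l
      = ∫⁻ y, liminf (fun n => ‖(truncate n (weight F)).1 y‖ₑ) atTop ∂rieszMeasure l :=
        lintegral_congr fun y => (lim y).symm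
    _ ≤ liminf (fun n => ∫⁻ y, ‖(truncate n (weight F)).1 y‖ₑ ∂rieszMeasure l) atTop :=
        lintegral_liminf_le fun n => (truncate n (weight F)).2.1.measurable.enorm
    _ ≤ ENNReal.ofReal (l (weight F)) :=
        liminf_le_of_frequently_le' (.of_forall bound)
    _ < ⊤ := ENNReal.ofReal_lt_top

lemma integral_rieszMeasure
    (hl : Tendsto (fun n => l (truncate n (weight F))) atTop (𝓝 (l (weight F))))
    (g : AtMostLinear F) : ∫ y, g.1 y ∂rieszMeasure l = l g := by
  refine tendsto_nhds_unique (tendsto_integral_truncate integrable_weight_rieszMeasure g) ?_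
  simpa only [integral_rieszMeasure_truncate] using tendsto_map_truncate hl g

end Representation

end AtMostLinear

/-! ### Extended-real integrals and the convex order -/

section ExtendedIntegral

variable {X Z : Type*} [MeasurableSpace X] [MeasurableSpace Z] {μ : Measure X}

lemma measurable_epos : Measurable epos :=
  .ite (measurableSet_singleton ⊤) measurable_const measurable_ereal_toReal.ennreal_ofReal

lemma epos_coe (t : ℝ) : epos (t : EReal) = ENNReal.ofReal t := by
  simp [epos]

lemma eInt_map {f : Z → EReal} (hf : Measurable f) {g : X → Z} (hg : Measurable g) :
    eInt f (μ.map g) = eInt (fun x => f (g x)) μ := by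
  simp only [eInt, lintegral_map (f := fun x => epos (f x)) (measurable_epos.comp hf) hg,
    lintegral_map (f := fun x => epos (-f x)) (measurable_epos.comp hf.neg) hg]

lemma eInt_coe_eq (θ : X → ℝ) : eInt (fun x => (θ x : EReal)) μ =
    ((∫⁻ x, ENNReal.ofReal (θ x) ∂μ : ℝ≥0∞) : EReal) -
      ((∫⁻ x, ENNReal.ofReal (-θ x) ∂μ : ℝ≥0∞) : EReal) := by
  simp_rw [eInt, ← EReal.coe_neg, epos_coe]

lemma eInt_coe_of_integrable {θ : X → ℝ} (hθ : Integrable θ μ) :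
    eInt (fun x => (θ x : EReal)) μ = (∫ x, θ x ∂μ : ℝ) := by
  rw [eInt_coe_eq, integral_eq_lintegral_pos_part_sub_lintegral_neg_part hθ, EReal.coe_sub,
    EReal.coe_ennreal_toReal hθ.lintegral_lt_top.ne,
    EReal.coe_ennreal_toReal (Integrable.lintegral_lt_top (f := fun x => -θ x) hθ.neg).ne]

lemma eInt_coe_of_nonneg {θ : X → ℝ} (hθ : ∀ x, 0 ≤ θ x) :
    eInt (fun x => (θ x : EReal)) μ = (∫⁻ x, ENNReal.ofReal (θ x) ∂μ : ℝ≥0∞) := by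
  simp [eInt_coe_eq, ENNReal.ofReal_of_nonpos (neg_nonpos.2 (hθ _))]

lemma eInt_coe_eq_top {g θ : X → ℝ} (hθ : AEStronglyMeasurable θ μ) (hg : Integrable g μ)
    (hle : g ≤ θ) (hni : ¬Integrable θ μ) : eInt (fun x => (θ x : EReal)) μ = ⊤ := by
  have hneg : ∫⁻ x, ENNReal.ofReal (-θ x) ∂μ ≠ ⊤ :=
    ((lintegral_mono fun x => ENNReal.ofReal_le_ofReal (neg_le_neg (hle x))).trans_lt
      hg.neg.lintegral_lt_top).ne
  have hpos : ∫⁻ x, ENNReal.ofReal (θ x) ∂μ = ⊤ := by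
    contrapose! hni
    have hmax : Integrable (fun x => max (θ x) 0) μ := by
      refine (lintegral_ofReal_ne_top_iff_integrable (f := fun x => max (θ x) 0)
        (hθ.sup aestronglyMeasurable_const) (.of_forall fun x => le_max_right _ _)).1 ?_
      simpa only [ENNReal.ofReal_max, ENNReal.ofReal_zero, max_zero] using hni
    exact integrable_of_le_of_le hθ (.of_forall hle) (.of_forall fun x => le_max_left _ _) hg hmax
  rw [eInt_coe_eq, hpos, EReal.coe_ennreal_top]
  exact EReal.top_sub (by simpa using hneg)

end ExtendedIntegral

lemma convexOn_ciSup {ι E : Type*} [Nonempty ι] [AddCommMonoid E] [Module ℝ E] {s : Set E}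
    {f : ι → E → ℝ} (hs : Convex ℝ s) (hf : ∀ i, ConvexOn ℝ s (f i))
    (hbdd : ∀ x, BddAbove (range fun i => f i x)) : ConvexOn ℝ s fun x => ⨆ i, f i x :=
  ⟨hs, fun x hx y hy _ _ ha hb hab => ciSup_le fun i =>
    ((hf i).2 hx hy ha hb hab).trans <| add_le_add
      (mul_le_mul_of_nonneg_left (le_ciSup (hbdd x) i) ha)
      (mul_le_mul_of_nonneg_left (le_ciSup (hbdd y) i) hb)⟩

lemma exists_convexOn_between {E : Type*} [AddCommGroup E] [Module ℝ E] {f g : E → ℝ}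
    (φ : E → E →ₗ[ℝ] ℝ) (h : ∀ y z, 0 ≤ g y + f z + φ y (z - y)) :
    ∃ θ : E → ℝ, ConvexOn ℝ univ θ ∧ -g ≤ θ ∧ θ ≤ f := by
  have hle (y z : E) : -g y - φ y (z - y) ≤ f z := by linarith [h y z]
  refine ⟨fun z => ⨆ y, (-g y - φ y (z - y)), convexOn_ciSup convex_univ (fun y => ?_)
    (fun z => ⟨f z, forall_mem_range.2 (hle · z)⟩), fun z => ?_, fun z => ciSup_le (hle · z)⟩
  · simp_rw [map_sub]
    exact (convexOn_const _ convex_univ).sub (((φ y).concaveOn convex_univ).sub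
      (convexOn_const _ convex_univ))
  · simpa using le_ciSup (f := fun y => -g y - φ y (z - y)) ⟨f z, forall_mem_range.2 (hle · z)⟩ z

lemma continuous_of_convexOn_univ {E : Type*} [NormedAddCommGroup E] [NormedSpace ℝ E]
    [FiniteDimensional ℝ E] {θ : E → ℝ} (hθ : ConvexOn ℝ univ θ) : Continuous θ :=
  continuousOn_univ.1 (hθ.continuousOn isOpen_univ)

lemma ConvexOrder.integral_le {E : Type*} [NormedAddCommGroup E] [NormedSpace ℝ E]
    [MeasurableSpace E] {ν' ν : Measure E} (h : ConvexOrder ν' ν) {θ : E → ℝ}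
    (hθ : ConvexOn ℝ univ θ) (hν' : Integrable θ ν') (hν : Integrable θ ν) :
    ∫ y, θ y ∂ν' ≤ ∫ y, θ y ∂ν := by
  simpa only [eInt_coe_of_integrable hν', eInt_coe_of_integrable hν, EReal.coe_le_coe_iff]
    using h θ hθ

/-! ### Strassen's theorem -/

namespace AtMostLinear

variable {F : Type*} [NormedAddCommGroup F] [MeasurableSpace F] [BorelSpace F]

lemma continuousLinearMap_mem {F : Type*} [NormedAddCommGroup F] [NormedSpace ℝ F]
    (A : StrongDual ℝ F) : ⇑A ∈ AtMostLinear F :=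
  (pullback A ⟨id, continuous_id, IsBigO.of_bound 1 (.of_forall fun t => by
    rw [id, one_mul, Real.norm_of_nonneg (by positivity : 0 ≤ 1 + ‖t‖)]
    exact le_add_of_nonneg_left zero_le_one)⟩).2

lemma isFiniteMeasure_of_integrable_weight {μ : Measure F} (hμ : Integrable (weight F).1 μ) :
    IsFiniteMeasure μ :=
  (integrable_const_iff_isFiniteMeasure (c := (1 : ℝ)) one_ne_zero).1
    (integrable hμ ⟨_, mem_of_bounded (.const F 1)⟩)

lemma ext_measure {μ ν : Measure F} [IsFiniteMeasure μ] [IsFiniteMeasure ν]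
    (h : ∀ g : AtMostLinear F, ∫ y, g.1 y ∂μ = ∫ y, g.1 y ∂ν) : μ = ν :=
  ext_of_forall_integral_eq_of_IsFiniteMeasure fun f => h ⟨f, mem_of_bounded f⟩

end AtMostLinear

lemma ae_integral_condKernel_eq_zero {E Y V : Type*} [NormedAddCommGroup E] [NormedSpace ℝ E]
    [FiniteDimensional ℝ E] [MeasurableSpace E] [BorelSpace E] [MeasurableSpace Y]
    [StandardBorelSpace Y] [Nonempty Y] [NormedAddCommGroup V] [NormedSpace ℝ V]
    [CompleteSpace V] {π : Measure (E × Y)} [IsFiniteMeasure π] {f : E × Y → V}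
    (hf : Integrable f π) (h : ∀ g : E →ᵇ ℝ, ∫ p, g p.1 • f p ∂π = 0) :
    ∀ᵐ y ∂π.fst, ∫ z, f (y, z) ∂π.condKernel y = 0 := by
  refine ae_eq_zero_of_integral_contDiff_smul_eq_zero
    hf.integral_condKernel.locallyIntegrable fun g hg hs => ?_
  obtain ⟨c, hc⟩ := hs.exists_bound_of_continuous hg.continuous
  have hgf : Integrable (fun p : E × Y => g p.1 • f p) π :=
    hf.bdd_smul c (hg.continuous.measurable.comp measurable_fst).aestronglyMeasurable
      (.of_forall fun p => hc p.1)
  calc ∫ y, g y • ∫ z, f (y, z) ∂π.condKernel y ∂π.fst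
      = ∫ y, ∫ z, g y • f (y, z) ∂π.condKernel y ∂π.fst := by simp_rw [integral_smul]
    _ = ∫ p, g p.1 • f p ∂π := Measure.integral_condKernel hgf
    _ = 0 := h (.ofNormedAddCommGroup g hg.continuous c hc)

section Strassen

open AtMostLinear

variable {E : Type*} [NormedAddCommGroup E] [NormedSpace ℝ E]

/-- The test functions of the form `(y, z) ↦ φ y (z - y)` with `φ y` linear, whose integrals vanish
against the law of a one-step martingale. -/
def martingaleTest (E : Type*) [NormedAddCommGroup E] [NormedSpace ℝ E] :
    Submodule ℝ (AtMostLinear (E × E)) where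
  carrier := {h | ∃ φ : E → E →ₗ[ℝ] ℝ, ∀ p, h.1 p = φ p.1 (p.2 - p.1)}
  add_mem' := fun ⟨φ, hφ⟩ ⟨ψ, hψ⟩ => ⟨φ + ψ, fun p => congrArg₂ (· + ·) (hφ p) (hψ p)⟩
  zero_mem' := ⟨0, fun _ => rfl⟩
  smul_mem' c _ := fun ⟨φ, hφ⟩ => ⟨c • φ, fun p => congrArg (c * ·) (hφ p)⟩

lemma mul_mem_martingaleTest (g : E →ᵇ ℝ) (A : StrongDual ℝ E) :
    ∃ h ∈ martingaleTest E, ∀ p : E × E, h.1 p = g p.1 * A (p.2 - p.1) :=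
  ⟨⟨_, mul_mem_of_bounded (g.compContinuous .fst)
      (continuousLinearMap_mem (A.comp (.snd ℝ E E - .fst ℝ E E)))⟩,
    ⟨fun y => g y • A.toLinearMap, fun _ => rfl⟩, fun _ => rfl⟩

/-- The functions `(y, z) ↦ g y + (f z + φ y (z - y))`, whose integrals against a martingale
coupling are determined by its marginals. -/
def martingaleCouplingTest (E : Type*) [NormedAddCommGroup E] [NormedSpace ℝ E] :
    (AtMostLinear E × AtMostLinear E × martingaleTest E) →ₗ[ℝ] AtMostLinear (E × E) :=
  (pullback (.fst ℝ E E)).coprod ((pullback (.snd ℝ E E)).coprod (martingaleTest E).subtype)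

lemma exists_le_martingaleCouplingTest (v : AtMostLinear (E × E)) :
    ∃ a, v ≤ martingaleCouplingTest E a := by
  obtain ⟨c, hc⟩ := exists_abs_le_mul_weight v
  have hc₀ : 0 ≤ c := by simpa [weight] using (abs_nonneg _).trans (hc 0)
  refine ⟨(c • weight E, c • weight E, 0), fun p => ?_⟩
  calc v.1 p ≤ c * (1 + ‖p‖) := (le_abs_self _).trans (hc p)
    _ ≤ c * ((1 + ‖p.1‖) + (1 + ‖p.2‖)) := by
      refine mul_le_mul_of_nonneg_left ?_ hc₀
      rw [Prod.norm_def]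
      linarith [max_le_add_of_nonneg (norm_nonneg p.1) (norm_nonneg p.2)]
    _ = (martingaleCouplingTest E (c • weight E, c • weight E, 0)).1 p := by
      simp [martingaleCouplingTest, pullback, weight, mul_add]

lemma weight_sub_truncate_prod_le (n : ℕ) :
    weight (E × E) - truncate n (weight (E × E)) ≤ martingaleCouplingTest E
      (weight E - truncate n (weight E), weight E - truncate n (weight E), 0) := fun p => by
  have tail_nonneg (y : E) : 0 ≤ (1 + ‖y‖) - (1 + ‖y‖) * cutoff n y :=
    sub_nonneg.2 (truncate_weight_le n y)
  suffices (1 + ‖p‖) - (1 + ‖p‖) * cutoff n p ≤ ((1 + ‖p.1‖) - (1 + ‖p.1‖) * cutoff n p.1) +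
      ((1 + ‖p.2‖) - (1 + ‖p.2‖) * cutoff n p.2) by
    simpa [martingaleCouplingTest, pullback, weight, truncate] using this
  rcases max_choice ‖p.1‖ ‖p.2‖ with h | h
  · rw [cutoff, Prod.norm_def, h]
    exact le_add_of_nonneg_right (tail_nonneg p.2)
  · rw [cutoff, Prod.norm_def, h]
    exact le_add_of_nonneg_left (tail_nonneg p.1)

variable [MeasurableSpace E] [BorelSpace E]

lemma tendsto_map_truncate_weight_prod {ν' ν : Measure E} (hν' : Integrable (weight E).1 ν')
    (hν : Integrable (weight E).1 ν) {l : AtMostLinear (E × E) →ₚ[ℝ] ℝ}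
    (hl : ∀ g f h',
      l (martingaleCouplingTest E (g, f, h')) = ∫ y, g.1 y ∂ν' + ∫ y, f.1 y ∂ν) :
    Tendsto (fun n => l (truncate n (weight (E × E)))) atTop (𝓝 (l (weight (E × E)))) := by
  have tail_tendsto {μ : Measure E} (hμ : Integrable (weight E).1 μ) :
      Tendsto (fun n => ∫ y, (weight E - truncate n (weight E)).1 y ∂μ) atTop (𝓝 0) := by
    have (n : ℕ) : ∫ y, (weight E - truncate n (weight E)).1 y ∂μ =
        ∫ y, (weight E).1 y ∂μ - ∫ y, (truncate n (weight E)).1 y ∂μ :=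
      integral_sub (integrable hμ _) (integrable hμ _)
    simp_rw [this]
    simpa using (tendsto_integral_truncate hμ (weight E)).const_sub (∫ y, (weight E).1 y ∂μ)
  have bound (n : ℕ) := (OrderHomClass.mono l (weight_sub_truncate_prod_le n)).trans_eq (hl _ _ _)
  simp_rw [map_sub] at bound
  have lim := (tail_tendsto hν').add (tail_tendsto hν)
  rw [add_zero] at lim
  have := squeeze_zero (fun n => sub_nonneg.2 (OrderHomClass.mono l (truncate_weight_le n)))
    bound lim
  simpa using this.const_sub (l (weight (E × E)))

variable [FiniteDimensional ℝ E]

lemma ConvexOrder.integral_add_integral_nonneg {ν' ν : Measure E} (h : ConvexOrder ν' ν)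
    (hν' : Integrable (weight E).1 ν') (hν : Integrable (weight E).1 ν) {g f : AtMostLinear E}
    (φ : E → E →ₗ[ℝ] ℝ) (hφ : ∀ y z, 0 ≤ g.1 y + f.1 z + φ y (z - y)) :
    0 ≤ ∫ y, g.1 y ∂ν' + ∫ y, f.1 y ∂ν := by
  obtain ⟨θ, hθ, hgθ, hθf⟩ := exists_convexOn_between φ hφ
  have θ_integrable {μ : Measure E} (hμ : Integrable (weight E).1 μ) : Integrable θ μ :=
    integrable_of_le_of_le (continuous_of_convexOn_univ hθ).aestronglyMeasurable
      (.of_forall hgθ) (.of_forall hθf) (integrable hμ g).neg (integrable hμ f)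
  have : -∫ y, g.1 y ∂ν' ≤ ∫ y, f.1 y ∂ν :=
    calc -∫ y, g.1 y ∂ν' = ∫ y, (-g.1) y ∂ν' := (integral_neg g.1).symm
      _ ≤ ∫ y, θ y ∂ν' := integral_mono (integrable hν' g).neg (θ_integrable hν') hgθ
      _ ≤ ∫ y, θ y ∂ν := h.integral_le hθ (θ_integrable hν') (θ_integrable hν)
      _ ≤ ∫ y, f.1 y ∂ν := integral_mono (θ_integrable hν) (integrable hν f) hθf
  linarith

lemma ConvexOrder.exists_positiveLinearMap {ν' ν : Measure E} (h : ConvexOrder ν' ν)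
    (hν' : Integrable (weight E).1 ν') (hν : Integrable (weight E).1 ν) :
    ∃ l : AtMostLinear (E × E) →ₚ[ℝ] ℝ, ∀ g f h',
      l (martingaleCouplingTest E (g, f, h')) = ∫ y, g.1 y ∂ν' + ∫ y, f.1 y ∂ν := by
  obtain ⟨l, hl⟩ := exists_positiveLinearMap_comp_eq
    (A := AtMostLinear E × AtMostLinear E × martingaleTest E) (martingaleCouplingTest E)
    ((integralₗ ν' hν').coprod ((integralₗ ν hν).coprod 0))
    (fun ⟨g, f, h', φ, hφ⟩ ha => by
      simpa [integralₗ] using h.integral_add_integral_nonneg hν' hν φ fun y z => by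
        simpa [martingaleCouplingTest, pullback, hφ, add_assoc] using ha (y, z))
    exists_le_martingaleCouplingTest
  exact ⟨l, fun g f h' => by simpa [integralₗ] using hl (g, f, h')⟩

lemma ConvexOrder.exists_martingale_coupling {ν' ν : Measure E} (h : ConvexOrder ν' ν)
    (hν' : Integrable (weight E).1 ν') (hν : Integrable (weight E).1 ν) :
    ∃ π ∈ Couplings ν' ν, Integrable (weight (E × E)).1 π ∧
      ∀ h' ∈ martingaleTest E, ∫ p, h'.1 p ∂π = 0 := by
  obtain ⟨l, hl⟩ := h.exists_positiveLinearMap hν' hν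
  have hπ (g f h') : ∫ p, (martingaleCouplingTest E (g, f, h')).1 p ∂rieszMeasure l =
      ∫ y, g.1 y ∂ν' + ∫ y, f.1 y ∂ν :=
    (integral_rieszMeasure (tendsto_map_truncate_weight_prod hν' hν hl) _).trans (hl g f h')
  have := isFiniteMeasure_of_integrable_weight hν'
  have := isFiniteMeasure_of_integrable_weight hν
  have := isFiniteMeasure_of_integrable_weight (integrable_weight_rieszMeasure (l := l))
  refine ⟨rieszMeasure l, ⟨ext_measure fun g => ?_, ext_measure fun f => ?_⟩,
    integrable_weight_rieszMeasure, fun h' hh' => ?_⟩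
  · rw [integral_map measurable_fst.aemeasurable g.2.1.aestronglyMeasurable]
    simpa [martingaleCouplingTest, pullback] using hπ g 0 0
  · rw [integral_map measurable_snd.aemeasurable f.2.1.aestronglyMeasurable]
    simpa [martingaleCouplingTest, pullback] using hπ 0 f 0
  · simpa [martingaleCouplingTest] using hπ 0 0 ⟨h', hh'⟩

lemma ConvexOrder.exists_markovKernel {ν' ν : Measure E} (h : ConvexOrder ν' ν)
    (hν' : Integrable (weight E).1 ν') (hν : Integrable (weight E).1 ν) :
    ∃ K : Kernel E E, IsMarkovKernel K ∧ K ∘ₘ ν' = ν ∧ ∀ᵐ y ∂ν', bary (K y) = y := by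
  obtain ⟨π, ⟨rfl, rfl⟩, hπ, hmart⟩ := h.exists_martingale_coupling hν' hν
  have := isFiniteMeasure_of_integrable_weight hπ
  have hdiff : Integrable (fun p : E × E => p.2 - p.1) π :=
    (hπ.const_mul 2).mono' (by fun_prop) <| .of_forall fun p => by
      simp only [weight]
      linarith [norm_sub_le p.2 p.1, norm_fst_le p, norm_snd_le p]
  have hcond : ∀ᵐ y ∂π.fst, ∫ z, (z - y) ∂π.condKernel y = 0 := by
    refine ae_integral_condKernel_eq_zero hdiff fun g => ?_
    have hint : Integrable (fun p : E × E => g p.1 • (p.2 - p.1)) π :=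
      hdiff.bdd_smul ‖g‖ (by fun_prop) (.of_forall fun p => g.norm_coe_le_norm p.1)
    refine SeparatingDual.eq_zero_of_forall_dual_eq_zero (R := ℝ) fun A => ?_
    obtain ⟨h', hh', heq⟩ := mul_mem_martingaleTest g A
    rw [← A.integral_comp_comm hint]
    simpa [heq] using hmart h' hh'
  refine ⟨π.condKernel, inferInstance, ?_, ?_⟩
  · rw [← Measure.snd_compProd]
    exact congrArg Measure.snd (π.disintegrate π.condKernel)
  · have hint : ∀ᵐ y ∂π.fst, Integrable (fun z => z - y) (π.condKernel y) :=
      hdiff.condKernel_ae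
    filter_upwards [hcond, hint] with y hy hyi
    have hid : Integrable (fun z : E => z) (π.condKernel y) := by
      simpa only [Pi.add_def, sub_add_cancel] using hyi.add (integrable_const y)
    simpa [bary, integral_sub hid (integrable_const y), sub_eq_zero] using hy

end Strassen

/-! ### Barycentres of kernels -/

lemma AtMostLinear.integrable_id {F : Type*} [NormedAddCommGroup F] [MeasurableSpace F]
    [BorelSpace F] [SecondCountableTopology F] {μ : Measure F}
    (hμ : Integrable (weight F).1 μ) : Integrable (fun y => y) μ :=
  hμ.mono' (by fun_prop) (.of_forall fun _ => le_add_of_nonneg_left zero_le_one)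

lemma exists_atMostLinear_le_of_convexOn {E : Type*} [NormedAddCommGroup E] [NormedSpace ℝ E]
    [FiniteDimensional ℝ E] {θ : E → ℝ} (hθ : ConvexOn ℝ univ θ) :
    ∃ g : AtMostLinear E, g.1 ≤ θ := by
  have hcont := continuous_of_convexOn_univ hθ
  obtain ⟨A, c, hle, -⟩ := hθ.exists_affine_le_of_lt (𝕜 := ℝ) (mem_univ (0 : E))
    (sub_one_lt (θ 0)) isClosed_univ (hcont.lowerSemicontinuous.lowerSemicontinuousOn _)
  exact ⟨⟨A, AtMostLinear.continuousLinearMap_mem A⟩ +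
    ⟨_, AtMostLinear.mem_of_bounded (.const E c)⟩, fun y => hle ⟨y, mem_univ y⟩⟩

section CompIntegral

variable {Ω Y F : Type*} [MeasurableSpace Ω] [MeasurableSpace Y] [NormedAddCommGroup F]
  [NormedSpace ℝ F] {Q : Measure Ω} {κ : Kernel Ω Y} {f : Y → F}

lemma integrable_integral_of_integrable_comp (hf : Integrable f (κ ∘ₘ Q)) :
    Integrable (fun ω => ∫ y, f y ∂κ ω) Q := by
  rw [Measure.comp_eq_comp_const_apply] at hf
  simpa using hf.integral_comp

lemma integral_integral_kernel (hf : Integrable f (κ ∘ₘ Q)) :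
    ∫ ω, ∫ y, f y ∂κ ω ∂Q = ∫ y, f y ∂(κ ∘ₘ Q) := by
  rw [Measure.comp_eq_comp_const_apply] at hf ⊢
  simpa using (Kernel.integral_comp hf).symm

end CompIntegral

section Barycentre

variable {Ω E : Type*} [MeasurableSpace Ω] [NormedAddCommGroup E] [NormedSpace ℝ E]
  [FiniteDimensional ℝ E] [MeasurableSpace E] [BorelSpace E]

lemma measurable_bary_kernel (κ : Kernel Ω E) [IsSFiniteKernel κ] :
    Measurable fun ω => bary (κ ω) :=
  stronglyMeasurable_id.integral_kernel.measurable

variable {Q : Measure Ω} [IsFiniteMeasure Q] {κ : Kernel Ω E}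

lemma integrable_weight_map_bary [IsSFiniteKernel κ]
    (h : Integrable (AtMostLinear.weight E).1 (κ ∘ₘ Q)) :
    Integrable (AtMostLinear.weight E).1 (Q.map fun ω => bary (κ ω)) := by
  rw [integrable_map_measure (AtMostLinear.weight E).2.1.aestronglyMeasurable
    (measurable_bary_kernel κ).aemeasurable]
  exact (integrable_const 1).add
    (integrable_integral_of_integrable_comp (AtMostLinear.integrable_id h)).norm

lemma ConvexOrder.map_bary [IsMarkovKernel κ]
    (h : Integrable (AtMostLinear.weight E).1 (κ ∘ₘ Q)) :
    ConvexOrder (Q.map fun ω => bary (κ ω)) (κ ∘ₘ Q) := by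
  intro θ hθ
  have hcont := continuous_of_convexOn_univ hθ
  have hmeas := (measurable_bary_kernel κ).aemeasurable (μ := Q)
  obtain ⟨g, hg⟩ := exists_atMostLinear_le_of_convexOn hθ
  rcases em' (Integrable θ (κ ∘ₘ Q)) with hint | hint
  · rw [eInt_coe_eq_top hcont.aestronglyMeasurable (AtMostLinear.integrable h g) hg hint]
    exact le_top
  have hjensen : ∀ᵐ ω ∂Q, θ (bary (κ ω)) ≤ ∫ y, θ y ∂κ ω := by
    filter_upwards [Measure.ae_integrable_of_integrable_comp (AtMostLinear.integrable_id h),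
      Measure.ae_integrable_of_integrable_comp hint] with ω hidω hintω
    exact hθ.map_integral_le hcont.continuousOn isClosed_univ (by simp) hidω hintω
  have hθbary : Integrable (fun ω => θ (bary (κ ω))) Q :=
    integrable_of_le_of_le (hcont.aestronglyMeasurable.comp_aemeasurable hmeas)
      (.of_forall fun ω => hg _) hjensen
      ((AtMostLinear.integrable (integrable_weight_map_bary h) g).comp_aemeasurable hmeas)
      (integrable_integral_of_integrable_comp hint)
  rw [eInt_coe_of_integrable hint, eInt_coe_of_integrable
    ((integrable_map_measure hcont.aestronglyMeasurable hmeas).2 hθbary), EReal.coe_le_coe_iff]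
  calc ∫ y, θ y ∂Q.map (fun ω => bary (κ ω)) = ∫ ω, θ (bary (κ ω)) ∂Q :=
        integral_map hmeas hcont.aestronglyMeasurable
    _ ≤ ∫ ω, ∫ y, θ y ∂κ ω ∂Q :=
        integral_mono_ae hθbary (integrable_integral_of_integrable_comp hint) hjensen
    _ = ∫ y, θ y ∂(κ ∘ₘ Q) := integral_integral_kernel hint

end Barycentre

section FiniteMoments

lemma convexOn_norm_rpow {E : Type*} [NormedAddCommGroup E] [NormedSpace ℝ E] {r : ℝ} (hr : 1 ≤ r) :
    ConvexOn ℝ univ fun y : E => ‖y‖ ^ r :=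
  ⟨convex_univ, fun x hx y hy _ _ ha hb hab =>
    (Real.rpow_le_rpow (norm_nonneg _) (convexOn_univ_norm.2 hx hy ha hb hab)
      (zero_le_one.trans hr)).trans
    ((convexOn_rpow hr).2 (norm_nonneg x) (norm_nonneg y) ha hb hab)⟩

variable {E : Type*} [NormedAddCommGroup E] [MeasurableSpace E] {r : ℝ}

lemma FinMom.integrable_weight [BorelSpace E] {μ : Measure E} [IsFiniteMeasure μ] (hr : 1 ≤ r)
    (h : FinMom r 0 μ) : Integrable (AtMostLinear.weight E).1 μ := by
  have hcont : Continuous fun y : E => dist y 0 ^ r := by fun_prop (disch := simp; linarith)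
  have hmom : Integrable (fun y : E => dist y 0 ^ r) μ :=
    (lintegral_ofReal_ne_top_iff_integrable hcont.measurable.aestronglyMeasurable
      (.of_forall fun y => by positivity)).1 (ne_of_lt h)
  refine ((integrable_const 2).add hmom).mono'
    (AtMostLinear.weight E).2.1.measurable.aestronglyMeasurable (.of_forall fun y => ?_)
  have hle : ‖y‖ ≤ 1 + ‖y‖ ^ r := by
    rcases le_total ‖y‖ 1 with hy | hy
    · exact hy.trans (le_add_of_nonneg_right (by positivity))
    · exact (Real.self_le_rpow_of_one_le hy hr).trans (le_add_of_nonneg_left zero_le_one)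
  have := AtMostLinear.weight_nonneg (F := E) y
  rw [Real.norm_of_nonneg this]
  simp only [AtMostLinear.weight, Pi.add_apply, dist_zero_right]
  linarith

lemma ConvexOrder.finMom [NormedSpace ℝ E] {ν' ν : Measure E} (h : ConvexOrder ν' ν) (hr : 1 ≤ r)
    (hν : FinMom r 0 ν) : FinMom r 0 ν' := by
  have hle := h _ (convexOn_norm_rpow hr)
  rw [eInt_coe_of_nonneg fun y => by positivity, eInt_coe_of_nonneg fun y => by positivity,
    EReal.coe_ennreal_le_coe_ennreal_iff] at hle
  simp only [FinMom, dist_zero_right] at hν ⊢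
  exact hle.trans_lt hν

lemma dirac_mem_Pr [BorelSpace E] (y : E) : Measure.dirac y ∈ Pr r (0 : E) := by
  refine ⟨inferInstance, ?_⟩
  rw [FinMom, lintegral_dirac' _ (by fun_prop)]
  exact ENNReal.ofReal_lt_top

lemma ae_mem_Pr_of_finMom_comp {Ω Y : Type*} [MeasurableSpace Ω] [PseudoMetricSpace Y]
    [MeasurableSpace Y] [OpensMeasurableSpace Y] {y₀ : Y} {Q : Measure Ω} {κ : Kernel Ω Y}
    [IsMarkovKernel κ] (h : FinMom r y₀ (κ ∘ₘ Q)) : ∀ᵐ ω ∂Q, κ ω ∈ Pr r y₀ := by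
  have hmeas : Measurable fun y : Y => ENNReal.ofReal (dist y y₀ ^ r) := by fun_prop
  rw [FinMom, Measure.lintegral_bind κ.aemeasurable hmeas.aemeasurable] at h
  filter_upwards [ae_lt_top hmeas.lintegral_kernel h.ne] with ω hω
  exact ⟨inferInstance, hω⟩

end FiniteMoments

/-! ### Elements of `Λ(μ,ν)` as laws of pairs -/

section Lambda

variable {X Y Ω : Type*} [MeasurableSpace X] [MeasurableSpace Y] [MeasurableSpace Ω]
  {μ : Measure X} {ν : Measure Y}

lemma intensityHat_mem_Couplings_iff {P : Measure (X × Measure Y)} [NeZero P]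
    (hP : ∀ᵐ xp ∂P, IsProbabilityMeasure xp.2) :
    intensityHat P ∈ Couplings μ ν ↔ P.map Prod.fst = μ ∧ P.bind Prod.snd = ν := by
  obtain ⟨κ, hκ, _⟩ := Kernel.exists_ae_eq_isMarkovKernel
    (κ := ⟨Prod.snd, measurable_snd⟩) hP (NeZero.ne P)
  replace hκ : Prod.snd =ᵐ[P] κ := hκ
  have hhat : intensityHat P = (Kernel.deterministic Prod.fst measurable_fst ×ₖ κ) ∘ₘ P := by
    refine Measure.bind_congr_right (hκ.mono fun xp hxp => ?_)
    rw [Kernel.prod_apply, Kernel.deterministic_apply, ← hxp]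
  rw [Couplings, mem_ofPred_eq, hhat, Measure.map_comp _ _ measurable_fst,
    Measure.map_comp _ _ measurable_snd, ← Kernel.fst_eq, ← Kernel.snd_eq, Kernel.fst_prod,
    Kernel.snd_prod, Measure.deterministic_comp_eq_map, Measure.bind_congr_right hκ]

lemma map_prodMk_mem_Lambda_iff {Q : Measure Ω} [IsProbabilityMeasure Q] {u : Ω → X}
    (hu : Measurable u) (κ : Kernel Ω Y) [IsMarkovKernel κ] :
    Q.map (fun ω => (u ω, κ ω)) ∈ Lambda μ ν ↔ Q.map u = μ ∧ κ ∘ₘ Q = ν := by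
  have hmeas : Measurable fun ω => (u ω, κ ω) := hu.prodMk κ.measurable
  have hprob : IsProbabilityMeasure (Q.map fun ω => (u ω, κ ω)) :=
    Measure.isProbabilityMeasure_map hmeas.aemeasurable
  have hae : ∀ᵐ xp ∂Q.map fun ω => (u ω, κ ω), IsProbabilityMeasure xp.2 :=
    (ae_map_iff hmeas.aemeasurable
      (measurable_snd ProbabilityMeasure.measurableSet_isProbabilityMeasure)).2
      (.of_forall fun ω => inferInstanceAs (IsProbabilityMeasure (κ ω)))
  rw [Lambda, mem_ofPred_eq, intensityHat_mem_Couplings_iff hae,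
    Measure.map_map measurable_fst hmeas, Measure.bind, Measure.map_map measurable_snd hmeas]
  exact ⟨fun h => h.2.2, fun h => ⟨hprob, hae, h⟩⟩

lemma exists_markovKernel_of_mem_Lambda {P : Measure (X × Measure Y)} (hP : P ∈ Lambda μ ν) :
    ∃ κ : Kernel (X × Measure Y) Y, IsMarkovKernel κ ∧ P.map (fun xp => (xp.1, κ xp)) = P := by
  have := hP.1
  obtain ⟨κ, hκ, hmarkov⟩ := Kernel.exists_ae_eq_isMarkovKernel
    (κ := ⟨Prod.snd, measurable_snd⟩) hP.2.1 (NeZero.ne P)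
  refine ⟨κ, hmarkov, (Measure.map_congr (hκ.mono fun xp hxp => ?_)).trans Measure.map_id⟩
  exact Prod.ext rfl hxp.symm

end Lambda

/-- A cost `C` is barycentric if on `𝒫_r` it depends on its second argument only through the
barycentre. -/
def IsBarycentric {X Z E : Type*} [NormedAddCommGroup E] [NormedSpace ℝ E] [MeasurableSpace E]
    (r : ℝ) (C : X × Measure E → Z) : Prop :=
  ∀ x, ∀ p ∈ Pr r (0 : E), ∀ q ∈ Pr r (0 : E), bary p = bary q → C (x, p) = C (x, q)

lemma measurable_comp_prodMk_dirac {X Y Z : Type*} [MeasurableSpace X] [MeasurableSpace Y]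
    [MeasurableSpace Z] {C : X × Measure Y → Z} (hC : Measurable C) :
    Measurable fun z : X × Y => C (z.1, Measure.dirac z.2) :=
  hC.comp (measurable_fst.prodMk (Measure.measurable_dirac.comp measurable_snd))

section BarycentricCost

variable {X Z Ω E : Type*} [MeasurableSpace X] [MeasurableSpace Z] [MeasurableSpace Ω]
  [NormedAddCommGroup E] [NormedSpace ℝ E] [FiniteDimensional ℝ E] [MeasurableSpace E]
  [BorelSpace E] {r : ℝ} {C : X × Measure E → Z}

lemma map_cost_eq_map_cost_dirac_bary (hC : Measurable C) (hbary : IsBarycentric r C)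
    {Q : Measure Ω} {u : Ω → X} (hu : Measurable u) {κ : Kernel Ω E} [IsMarkovKernel κ]
    (hκ : FinMom r 0 (κ ∘ₘ Q)) :
    (Q.map fun ω => (u ω, κ ω)).map C =
      (Q.map fun ω => (u ω, bary (κ ω))).map fun z => C (z.1, Measure.dirac z.2) := by
  rw [Measure.map_map hC (hu.prodMk κ.measurable),
    Measure.map_map (measurable_comp_prodMk_dirac hC) (hu.prodMk (measurable_bary_kernel κ))]
  refine Measure.map_congr ((ae_mem_Pr_of_finMom_comp hκ).mono fun ω hω => ?_)
  exact hbary (u ω) _ hω _ (dirac_mem_Pr _) (by simp [bary])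

lemma exists_couplings_map_eq_of_mem_Lambda (hr : 1 ≤ r) (hC : Measurable C)
    (hbary : IsBarycentric r C) {μ : Measure X} {ν : Measure E} [IsProbabilityMeasure ν]
    (hν : FinMom r 0 ν) {P : Measure (X × Measure E)} (hP : P ∈ Lambda μ ν) :
    ∃ ν', IsProbabilityMeasure ν' ∧ FinMom r 0 ν' ∧ ConvexOrder ν' ν ∧
      ∃ π ∈ Couplings μ ν', P.map C = π.map fun z => C (z.1, Measure.dirac z.2) := by
  have := hP.1
  obtain ⟨κ, hκ, hPκ⟩ := exists_markovKernel_of_mem_Lambda hP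
  obtain ⟨rfl, rfl⟩ := (map_prodMk_mem_Lambda_iff measurable_fst κ).1 (hPκ ▸ hP)
  have hb := measurable_bary_kernel κ
  have hpair := measurable_fst.prodMk hb
  have horder := ConvexOrder.map_bary (hν.integrable_weight hr)
  refine ⟨P.map fun xp => bary (κ xp), Measure.isProbabilityMeasure_map hb.aemeasurable,
    horder.finMom hr hν, horder, P.map fun xp => (xp.1, bary (κ xp)),
    ⟨Measure.map_map measurable_fst hpair, Measure.map_map measurable_snd hpair⟩, ?_⟩
  rw [← map_cost_eq_map_cost_dirac_bary hC hbary measurable_fst hν, hPκ]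

lemma exists_mem_Lambda_map_eq_of_couplings (hr : 1 ≤ r) (hC : Measurable C)
    (hbary : IsBarycentric r C) {μ : Measure X} {ν' ν : Measure E} [IsProbabilityMeasure ν']
    [IsProbabilityMeasure ν] (hν' : FinMom r 0 ν') (hν : FinMom r 0 ν) (horder : ConvexOrder ν' ν)
    {π : Measure (X × E)} (hπ : π ∈ Couplings μ ν') :
    ∃ P ∈ Lambda μ ν, P.map C = π.map fun z => C (z.1, Measure.dirac z.2) := by
  obtain ⟨rfl, rfl⟩ := hπ
  have := Measure.isProbabilityMeasure_of_map (μ := π) Prod.snd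
  obtain ⟨K, hK, rfl, hKbary⟩ :=
    horder.exists_markovKernel (hν'.integrable_weight hr) (hν.integrable_weight hr)
  have hcomp : K.prodMkLeft X ∘ₘ π = K ∘ₘ π.map Prod.snd := by
    rw [Measure.bind, Measure.bind, Measure.map_map K.measurable measurable_snd]
    rfl
  have hmap : π.map (fun z => (z.1, bary (K.prodMkLeft X z))) = π := by
    refine (Measure.map_congr ?_).trans Measure.map_id
    filter_upwards [ae_of_ae_map measurable_snd.aemeasurable hKbary] with z hz
    exact Prod.ext rfl hz
  refine ⟨_, (map_prodMk_mem_Lambda_iff measurable_fst (K.prodMkLeft X)).2 ⟨rfl, hcomp⟩, ?_⟩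
  rw [map_cost_eq_map_cost_dirac_bary hC hbary measurable_fst (hcomp ▸ hν), hmap]

end BarycentricCost

end WOT

theorem statement9_general {X Z W E : Type*} [MeasurableSpace X] [MeasurableSpace Z]
    [NormedAddCommGroup E] [NormedSpace ℝ E] [FiniteDimensional ℝ E] [MeasurableSpace E]
    [BorelSpace E] {r : ℝ} (hr : 1 ≤ r) {μ : Measure X} {ν : Measure E} [IsProbabilityMeasure ν]
    (hν : FinMom r 0 ν) {C : X × Measure E → Z} (hC : Measurable C) (hbary : IsBarycentric r C)
    (F : Measure Z → W) :
    {v | ∃ P ∈ Lambda μ ν, v = F (P.map C)} =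
      {v | ∃ ν', IsProbabilityMeasure ν' ∧ FinMom r 0 ν' ∧ ConvexOrder ν' ν ∧
        ∃ π ∈ Couplings μ ν', v = F (π.map fun z => C (z.1, Measure.dirac z.2))} := by
  ext v
  constructor
  · rintro ⟨P, hP, rfl⟩
    obtain ⟨ν', hprob, hν', horder, π, hπ, heq⟩ :=
      exists_couplings_map_eq_of_mem_Lambda hr hC hbary hν hP
    exact ⟨ν', hprob, hν', horder, π, hπ, congrArg F heq⟩
  · rintro ⟨ν', hprob, hν', horder, π, hπ, rfl⟩
    obtain ⟨P, hP, heq⟩ := exists_mem_Lambda_map_eq_of_couplings hr hC hbary hν' hν horder hπ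
    exact ⟨P, hP, congrArg F heq.symm⟩

/-- barycentric costs and the convex order
(Proposition `prop:convex order barycentric C` (a)). -/
theorem statement9 {X : Type*} [MeasurableSpace X] [MetricSpace X] [CompleteSpace X]
    [SecondCountableTopology X] [BorelSpace X] (d : ℕ) (r : ℝ) (hr : 1 ≤ r) (x₀ : X)
    (μ : Measure X) (ν : Measure (EuclideanSpace ℝ (Fin d)))
    [IsProbabilityMeasure μ] [IsProbabilityMeasure ν]
    (hμ : FinMom r x₀ μ) (hν : FinMom r (0 : EuclideanSpace ℝ (Fin d)) ν)
    (C : X × Measure (EuclideanSpace ℝ (Fin d)) → EReal) (hC : Measurable C)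
    (hbary : ∀ x, ∀ p ∈ Pr r (0 : EuclideanSpace ℝ (Fin d)),
      ∀ q ∈ Pr r (0 : EuclideanSpace ℝ (Fin d)), bary p = bary q → C (x, p) = C (x, q))
    (hwell : ∀ P ∈ Lambda μ ν, eIntWellDef C P) :
    sInf {v : EReal | ∃ P ∈ Lambda μ ν, v = eInt C P}
      = sInf {v : EReal | ∃ ν' : Measure (EuclideanSpace ℝ (Fin d)),
          IsProbabilityMeasure ν' ∧ FinMom r (0 : EuclideanSpace ℝ (Fin d)) ν' ∧
          ConvexOrder ν' ν ∧
          ∃ π ∈ Couplings μ ν', v = eInt (fun z => C (z.1, Measure.dirac z.2)) π} := by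
  simpa only [eInt_map measurable_id, hC, measurable_comp_prodMk_dirac hC, id] using
    congrArg sInf (statement9_general (μ := μ) hr hν hC hbary (eInt id))
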